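/- In the calculus λ^test_trust, every closed typed term that contains no redex is a value. -/

import Mathlib

open scoped Classical

/-- Types of the calculus λ^test_trust. -/
inductive Ty : Type where
  | atom : ℕ → Ty
  | arrow : Ty → Ty → Ty
  | sum : List Ty → Ty
  | tuple : Ty → ℕ → Ty
  | bool : List (ℚ × Ty) → ℚ → Ty

/-- Subtyping relation extending a relation `S` on atomic types.
    The convention identifying a one-summand sum with its summand is included. -/
inductive SubTy (S : ℕ → ℕ → Prop) : Ty → Ty → Prop where
  | refl (A) : SubTy S A A
  | trans {A B C} : SubTy S A B → SubTy S B C → SubTy S A C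
  | atom {a b} : S a b → SubTy S (.atom a) (.atom b)
  | arrow {A1 A2 B1 B2} : SubTy S B1 A1 → SubTy S A2 B2 →
      SubTy S (.arrow A1 A2) (.arrow B1 B2)
  | sum {As Bs : List Ty} (g : Fin As.length → Ty) :
      (∀ i, g i ∈ Bs) → (∀ i, SubTy S (As.get i) (g i)) →
      SubTy S (.sum As) (.sum Bs)
  | tuple {A B m n} : SubTy S A B → n ≤ m → SubTy S (.tuple A m) (.tuple B n)
  | sumSingle (A) : SubTy S (.sum [A]) A
  | singleSum (A) : SubTy S A (.sum [A])

/-- Terms of the calculus λ^test_trust. -/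
inductive Tm : Type where
  | tt : Tm
  | ff : Tm
  | var : ℕ → Tm
  | lam : ℕ → Ty → Tm → Tm
  | app : Tm → Tm → Tm
  | choice : List ℚ → List Tm → Tm
  | exp : ℕ → Tm → Tm
  | tup : List Tm → Tm
  | proj : Tm → ℕ → Tm
  | trust : Tm → List (ℚ × Ty) → ℚ → Tm

mutual
/-- Substitution `t[s/x]`. -/
def subst (x : ℕ) (s : Tm) : Tm → Tm
  | .tt => .tt
  | .ff => .ff
  | .var y => if y = x then s else .var y
  | .lam y A t => if y = x then .lam y A t else .lam y A (subst x s t)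
  | .app t u => .app (subst x s t) (subst x s u)
  | .choice qs ts => .choice qs (substList x s ts)
  | .exp n t => .exp n (subst x s t)
  | .tup ts => .tup (substList x s ts)
  | .proj t j => .proj (subst x s t) j
  | .trust t P e => .trust (subst x s t) P e

def substList (x : ℕ) (s : Tm) : List Tm → List Tm
  | [] => []
  | t :: ts => subst x s t :: substList x s ts
end

/-- Typing judgement of λ^test_trust, relative to an atomic subtyping relation `S`
    and an assignment `env` of types to variables. -/
inductive HasTy (S : ℕ → ℕ → Prop) : (ℕ → Ty) → Tm → Ty → Prop where
  | tt {env P e} : HasTy S env .tt (.bool P e)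
  | ff {env P e} : HasTy S env .ff (.bool P e)
  | var {env x} : HasTy S env (.var x) (env x)
  | lam {env x A t B} : HasTy S (Function.update env x A) t B →
      HasTy S env (.lam x A t) (.arrow A B)
  | app {env f u A B C} : HasTy S env f (.arrow A B) → HasTy S env u C →
      SubTy S C A → HasTy S env (.app f u) B
  | appChoice {env f u C} {As : List (Ty × Ty)} :
      HasTy S env f (.sum (As.map (fun p => Ty.arrow p.1 p.2))) →
      HasTy S env u C → (∀ p ∈ As, SubTy S C p.1) → As ≠ [] →
      HasTy S env (.app f u) (.sum (As.map Prod.snd))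
  | choice {env qs ts} {As : List Ty} : qs.length = ts.length → ts ≠ [] → qs.sum = 1 →
      ts.length = As.length →
      (∀ i (h1 : i < ts.length) (h2 : i < As.length),
        HasTy S env (ts.get ⟨i, h1⟩) (As.get ⟨i, h2⟩)) →
      (∃ A, ∀ B ∈ As, SubTy S B A) →
      HasTy S env (.choice qs ts) (.sum As)
  | exp {env n t A} : 1 ≤ n → HasTy S env t A →
      HasTy S env (.exp n t) (.tuple A n)
  | tup {env ts E} {Es : List Ty} : ts ≠ [] → ts.length = Es.length →
      (∀ i (h1 : i < ts.length) (h2 : i < Es.length),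
        HasTy S env (ts.get ⟨i, h1⟩) (Es.get ⟨i, h2⟩)) →
      (∀ E' ∈ Es, SubTy S E' E) → HasTy S env (.tup ts) (.tuple E ts.length)
  | proj {env t A n j} : HasTy S env t (.tuple A n) → 1 ≤ j → j ≤ n →
      HasTy S env (.proj t j) A
  | trust {env t A n P e} : HasTy S env t (.tuple A n) →
      HasTy S env (.trust t P e) (.bool P e)

/-- Values of λ^test_trust. -/
inductive IsValue : Tm → Prop where
  | tt : IsValue .tt
  | ff : IsValue .ff
  | lam {x A t} : IsValue (.lam x A t)
  | tup {ts} : (∀ u ∈ ts, IsValue u) → IsValue (.tup ts)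

/-- `ClosedU V t`: all free variables of `t` are in `V`. -/
inductive ClosedU : List ℕ → Tm → Prop where
  | tt {V} : ClosedU V .tt
  | ff {V} : ClosedU V .ff
  | var {V x} : x ∈ V → ClosedU V (.var x)
  | lam {V x A t} : ClosedU (x :: V) t → ClosedU V (.lam x A t)
  | app {V t u} : ClosedU V t → ClosedU V u → ClosedU V (.app t u)
  | choice {V qs ts} : (∀ t ∈ ts, ClosedU V t) → ClosedU V (.choice qs ts)
  | exp {V n t} : ClosedU V t → ClosedU V (.exp n t)
  | tup {V ts} : (∀ t ∈ ts, ClosedU V t) → ClosedU V (.tup ts)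
  | proj {V t j} : ClosedU V t → ClosedU V (.proj t j)
  | trust {V t P e} : ClosedU V t → ClosedU V (.trust t P e)

/-- `t` is a closed term. -/
def Closed (t : Tm) : Prop := ClosedU [] t

/-- The frequency distribution encoded by the list of types `Ss` is within
    total-variation distance `ε` of the probability distribution `P` over types. -/
def FreqClose (S : ℕ → ℕ → Prop) (Ss : List Ty) (P : List (ℚ × Ty)) (ε : ℚ) : Prop :=
  (∀ qB ∈ P,
      |((Ss.countP (fun T => decide (SubTy S T qB.2)) : ℚ) / (Ss.length : ℚ)) - qB.1| ≤ ε) ∧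
  (∀ T ∈ Ss, ∃ qB ∈ P, SubTy S T qB.2)

/-- The tuple of values `ss` passes the trustworthiness check against `P` with threshold `ε`. -/
def TrustCond (S : ℕ → ℕ → Prop) (env : ℕ → Ty) (ss : List Tm)
    (P : List (ℚ × Ty)) (ε : ℚ) : Prop :=
  ∃ Ss : List Ty, List.Forall₂ (HasTy S env) ss Ss ∧ FreqClose S Ss P ε

/-- Base reduction rules `t ↦ᵢ_p t'` of λ^test_trust; the natural number `i`
    records which rule instance is used (the index of the chosen branch for a
    probabilistic choice, `0` otherwise), and `p` is the probability label. -/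
inductive Step (S : ℕ → ℕ → Prop) (env : ℕ → Ty) : Tm → ℕ → ℚ → Tm → Prop where
  | beta {x A t u} : Step S env (.app (.lam x A t) u) 0 1 (subst x u t)
  | choice {qs ts} {i : ℕ} (h1 : i < qs.length) (h2 : i < ts.length) :
      Step S env (.choice qs ts) i (qs.get ⟨i, h1⟩) (ts.get ⟨i, h2⟩)
  | exp {n t} : Step S env (.exp n t) 0 1 (.tup (List.replicate n t))
  | proj {ts : List Tm} {j : ℕ} (hj : 1 ≤ j) (h : j - 1 < ts.length) :
      Step S env (.proj (.tup ts) j) 0 1 (ts.get ⟨j - 1, h⟩)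
  | trustT {ts P e} : (∀ u ∈ ts, IsValue u) → TrustCond S env ts P e →
      Step S env (.trust (.tup ts) P e) 0 1 .tt
  | trustF {ts P e} : (∀ u ∈ ts, IsValue u) → ¬ TrustCond S env ts P e →
      Step S env (.trust (.tup ts) P e) 0 1 .ff

/-- The call-by-name reduction strategy of λ^test_trust. -/
inductive CBN (S : ℕ → ℕ → Prop) (env : ℕ → Ty) : Tm → ℕ → ℚ → Tm → Prop where
  | base {t i p t'} : Step S env t i p t' → CBN S env t i p t'
  | appL {t i p t' u} : CBN S env t i p t' → CBN S env (.app t u) i p (.app t' u)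
  | tup {pre post : List Tm} {t i p t'} : (∀ u ∈ pre, IsValue u) → ¬ IsValue t →
      CBN S env t i p t' →
      CBN S env (.tup (pre ++ t :: post)) i p (.tup (pre ++ t' :: post))
  | trust {t i p t' P e} : CBN S env t i p t' →
      CBN S env (.trust t P e) i p (.trust t' P e)
  | proj {t i p t' j} : (∀ ts, t ≠ .tup ts) → CBN S env t i p t' →
      CBN S env (.proj t j) i p (.proj t' j)

/-- Redexes of λ^test_trust. -/
inductive IsRedex : Tm → Prop where
  | beta {x A t u} : IsRedex (.app (.lam x A t) u)
  | choice {qs ts} : IsRedex (.choice qs ts)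
  | exp {n t} : IsRedex (.exp n t)
  | proj {ts : List Tm} {j : ℕ} : 1 ≤ j → j ≤ ts.length → IsRedex (.proj (.tup ts) j)
  | trust {ts P e} : (∀ u ∈ ts, IsValue u) → IsRedex (.trust (.tup ts) P e)

/-- `t` contains a redex (as a subterm). -/
inductive HasRedex : Tm → Prop where
  | here {t} : IsRedex t → HasRedex t
  | lam {x A t} : HasRedex t → HasRedex (.lam x A t)
  | appL {t u} : HasRedex t → HasRedex (.app t u)
  | appR {t u} : HasRedex u → HasRedex (.app t u)
  | choice {qs ts t} : t ∈ ts → HasRedex t → HasRedex (.choice qs ts)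
  | exp {n t} : HasRedex t → HasRedex (.exp n t)
  | tup {ts t} : t ∈ ts → HasRedex t → HasRedex (.tup ts)
  | proj {t j} : HasRedex t → HasRedex (.proj t j)
  | trust {t P e} : HasRedex t → HasRedex (.trust t P e)

/-- Full (unrestricted) one-step reduction: a base reduction applied in an
    arbitrary position. -/
inductive Full (S : ℕ → ℕ → Prop) (env : ℕ → Ty) : Tm → Tm → Prop where
  | base {t t' i p} : Step S env t i p t' → Full S env t t'
  | lam {x A t t'} : Full S env t t' → Full S env (.lam x A t) (.lam x A t')
  | appL {t t' u} : Full S env t t' → Full S env (.app t u) (.app t' u)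
  | appR {t u u'} : Full S env u u' → Full S env (.app t u) (.app t u')
  | choice {qs pre post t t'} : Full S env t t' →
      Full S env (.choice qs (pre ++ t :: post)) (.choice qs (pre ++ t' :: post))
  | exp {n t t'} : Full S env t t' → Full S env (.exp n t) (.exp n t')
  | tup {pre post t t'} : Full S env t t' →
      Full S env (.tup (pre ++ t :: post)) (.tup (pre ++ t' :: post))
  | proj {t t' j} : Full S env t t' → Full S env (.proj t j) (.proj t' j)
  | trust {t t' P e} : Full S env t t' → Full S env (.trust t P e) (.trust t' P e)

/-!
A closed term is never stuck on a variable, and a value of arrow or tuple type is an abstraction or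
a tuple, while no value has a sum type. So a value in the scrutinee position of an elimination form
completes a redex, and induction on the typing derivation shows that the call-by-name strategy
alone already reduces every closed typed term that is not a value.
-/

section Progress

variable {S : ℕ → ℕ → Prop} {env : ℕ → Ty}

theorem HasTy.length_eq_of_tup {ts : List Tm} {A : Ty} {n : ℕ}
    (ht : HasTy S env (.tup ts) (.tuple A n)) : ts.length = n := by
  cases ht
  rfl

namespace IsValue

theorem exists_eq_lam {f : Tm} {A B : Ty} (hv : IsValue f) (hf : HasTy S env f (.arrow A B)) :
    ∃ x b, f = .lam x A b := by
  cases hv <;> cases hf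
  exact ⟨_, _, rfl⟩

theorem exists_eq_tup {t : Tm} {A : Ty} {n : ℕ} (hv : IsValue t)
    (ht : HasTy S env t (.tuple A n)) : ∃ ts, t = .tup ts ∧ ∀ u ∈ ts, IsValue u := by
  cases hv with
  | tup hts => exact ⟨_, rfl, hts⟩
  | _ => cases ht

theorem not_hasTy_sum {t : Tm} {As : List Ty} (hv : IsValue t) : ¬ HasTy S env t (.sum As) := by
  intro ht
  cases hv <;> cases ht

end IsValue

theorem Step.isRedex {t t' : Tm} {i : ℕ} {p : ℚ} (h : Step S env t i p t') : IsRedex t := by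
  cases h with
  | beta => exact .beta
  | choice => exact .choice
  | exp => exact .exp
  | proj hj h => exact .proj hj (by omega)
  | trustT hts => exact .trust hts
  | trustF hts => exact .trust hts

theorem CBN.hasRedex {t t' : Tm} {i : ℕ} {p : ℚ} (h : CBN S env t i p t') : HasRedex t := by
  induction h with
  | base h => exact .here h.isRedex
  | appL _ ih => exact .appL ih
  | tup _ _ _ ih => exact .tup List.mem_append_cons_self ih
  | trust _ ih => exact .trust ih
  | proj _ _ ih => exact .proj ih

/-- Normal forms of the call-by-name strategy: terms with no reduct, whatever the rule instance and
the probability label. -/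
def CBNNormal (S : ℕ → ℕ → Prop) (env : ℕ → Ty) (t : Tm) : Prop :=
  ∀ i p t', ¬ CBN S env t i p t'

namespace CBNNormal

theorem not_step {t t' : Tm} {i : ℕ} {p : ℚ} (h : CBNNormal S env t) : ¬ Step S env t i p t' :=
  fun hstep => h _ _ _ (.base hstep)

theorem of_app {f u : Tm} (h : CBNNormal S env (.app f u)) : CBNNormal S env f :=
  fun _ _ _ hstep => h _ _ _ (.appL hstep)

theorem of_trust {t : Tm} {P : List (ℚ × Ty)} {ε : ℚ} (h : CBNNormal S env (.trust t P ε)) :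
    CBNNormal S env t :=
  fun _ _ _ hstep => h _ _ _ (.trust hstep)

theorem of_proj {t : Tm} {j : ℕ} (h : CBNNormal S env (.proj t j)) (ht : ∀ ts, t ≠ .tup ts) :
    CBNNormal S env t :=
  fun _ _ _ hstep => h _ _ _ (.proj ht hstep)

-- The strategy reduces the leftmost component that is not a value.
theorem isValue_tup {ts : List Tm} (h : CBNNormal S env (.tup ts))
    (hts : ∀ u ∈ ts, CBNNormal S env u → IsValue u) : IsValue (.tup ts) := by
  refine .tup ?_
  by_contra! ⟨v, hv, hv_not_value⟩
  obtain ⟨u, pre, post, hpre, hu, rfl, -⟩ :=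
    List.exists_of_eraseP (p := fun u => ¬ IsValue u) hv (decide_eq_true hv_not_value)
  simp only [decide_not, Bool.not_eq_eq_eq_not, Bool.not_true, decide_eq_false_iff_not,
    not_not] at hpre hu
  exact hu (hts u List.mem_append_cons_self fun _ _ _ hstep => h _ _ _ (.tup hpre hu hstep))

theorem not_proj_of_hasTy_tup {ts : List Tm} {A : Ty} {n j : ℕ}
    (ht : HasTy S env (.tup ts) (.tuple A n)) (hj : 1 ≤ j) (hjn : j ≤ n) :
    ¬ CBNNormal S env (.proj (.tup ts) j) := by
  have hlen := ht.length_eq_of_tup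
  exact fun h => h.not_step (.proj hj (by omega))

theorem not_trust_tup {ts : List Tm} {P : List (ℚ × Ty)} {ε : ℚ} (hts : ∀ u ∈ ts, IsValue u) :
    ¬ CBNNormal S env (.trust (.tup ts) P ε) := by
  intro h
  by_cases hcond : TrustCond S env ts P ε
  · exact h.not_step (.trustT hts hcond)
  · exact h.not_step (.trustF hts hcond)

theorem not_choice {qs : List ℚ} {ts : List Tm} (hlen : qs.length = ts.length) (hts : ts ≠ []) :
    ¬ CBNNormal S env (.choice qs ts) := by
  have hpos : 0 < ts.length := List.length_pos_iff.mpr hts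
  exact fun h => h.not_step (.choice (hlen ▸ hpos) hpos)

end CBNNormal

theorem closed_noredex_is_value_general {t : Tm} {T : Ty} (ht : HasTy S env t T) (hc : Closed t)
    (hnf : CBNNormal S env t) : IsValue t := by
  unfold Closed at hc
  induction ht with
  | tt => exact .tt
  | ff => exact .ff
  | var => cases hc with | var hx => exact absurd hx List.not_mem_nil
  | lam => exact .lam
  | app hf _ _ ihf _ =>
    cases hc with | app hcf _ =>
    obtain ⟨x, b, rfl⟩ := (ihf hcf hnf.of_app).exists_eq_lam hf
    exact absurd .beta hnf.not_step
  | appChoice hf _ _ _ ihf _ =>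
    cases hc with | app hcf _ =>
    exact absurd hf (ihf hcf hnf.of_app).not_hasTy_sum
  | choice hlen hts => exact absurd hnf (CBNNormal.not_choice hlen hts)
  | exp => exact absurd .exp hnf.not_step
  | tup _ hlen _ _ ih =>
    cases hc with | tup hcts =>
    refine hnf.isValue_tup fun u hu hu_normal => ?_
    obtain ⟨i, hi, rfl⟩ := List.mem_iff_getElem.mp hu
    exact ih i hi (hlen ▸ hi) (hcts _ hu) hu_normal
  | @proj _ t _ _ _ ht hj hjn ih =>
    cases hc with | proj hct =>
    have h_not_tup : ∀ ts, t ≠ .tup ts := by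
      rintro ts rfl
      exact CBNNormal.not_proj_of_hasTy_tup ht hj hjn hnf
    obtain ⟨ts, hts, -⟩ := (ih hct (hnf.of_proj h_not_tup)).exists_eq_tup ht
    exact absurd hts (h_not_tup ts)
  | trust ht ih =>
    cases hc with | trust hct =>
    obtain ⟨ts, rfl, hts⟩ := (ih hct hnf.of_trust).exists_eq_tup ht
    exact absurd hnf (CBNNormal.not_trust_tup hts)

end Progress

/-- In λ^test_trust, every closed typed term that contains no redex is a value. -/
theorem closed_noredex_is_value (S : ℕ → ℕ → Prop) (env : ℕ → Ty)
    (t : Tm) (T : Ty) (ht : HasTy S env t T) (hc : Closed t)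
    (hnr : ¬ HasRedex t) : IsValue t :=
  closed_noredex_is_value_general ht hc fun _ _ _ hstep => hnr hstep.hasRedex
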